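/- arXiv:2307.13381 — 10 statements merged into one kernel-verified Lean document; each statement's English description precedes it below -/
import Mathlib

section
/- Let E be a real inner product space and let f : E → ℝ be differentiable with gradient ∇f. Assume ∇f is L-Lipschitz (L ≥ 0), i.e. ‖∇f(x₁) − ∇f(x₂)‖ ≤ L‖x₁ − x₂‖ for all x₁, x₂ ∈ E, and that f is μ-strongly convex (μ ≥ 0), i.e. f(y) ≥ f(x) + ⟨∇f(x), y − x⟩ + (μ/2)‖y − x‖² for all x, y ∈ E. Then for all x, y, z ∈ E: ⟨∇f(x), z − y⟩ ≥ f(z) − f(y) + (μ/4)‖y − z‖² − L‖z − x‖². -/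
open scoped RealInnerProductSpace

/-- Perturbed strong convexity (Lemma A.1): if `f` has `L`-Lipschitz gradient `f'`
and is `μ`-strongly convex, then for all `x, y, z`,
`⟪∇f(x), z − y⟫ ≥ f(z) − f(y) + (μ/4)‖y − z‖² − L‖z − x‖²`. -/
theorem perturbed_strong_convexity
    {E : Type*} [NormedAddCommGroup E] [InnerProductSpace ℝ E]
    (f : E → ℝ) (f' : E → E) (L μ : ℝ) (hL : 0 ≤ L) (hμ : 0 ≤ μ)
    (hdiff : ∀ x : E, HasFDerivAt f (InnerProductSpace.toDualMap ℝ E (f' x) : E →L[ℝ] ℝ) x)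
    (hLip : ∀ x₁ x₂ : E, ‖f' x₁ - f' x₂‖ ≤ L * ‖x₁ - x₂‖)
    (hsc : ∀ x y : E, f y ≥ f x + ⟪f' x, y - x⟫ + μ / 2 * ‖y - x‖ ^ 2) :
    ∀ x y z : E,
      ⟪f' x, z - y⟫ ≥ f z - f y + μ / 4 * ‖y - z‖ ^ 2 - L * ‖z - x‖ ^ 2 := by
  intro x y z
  have h1 := hsc x y
  have h2 := hsc z x
  have h3 : ⟪f' z - f' x, z - x⟫ ≤ L * ‖z - x‖ ^ 2 := by
    calc ⟪f' z - f' x, z - x⟫ ≤ ‖f' z - f' x‖ * ‖z - x‖ := real_inner_le_norm _ _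
      _ ≤ (L * ‖z - x‖) * ‖z - x‖ :=
        mul_le_mul_of_nonneg_right (hLip z x) (norm_nonneg _)
      _ = L * ‖z - x‖ ^ 2 := by ring
  have h4 : ‖y - z‖ ^ 2 ≤ 2 * ‖y - x‖ ^ 2 + 2 * ‖x - z‖ ^ 2 := by
    have h := norm_sub_le_norm_sub_add_norm_sub y x z
    nlinarith [sq_nonneg (‖y - x‖ - ‖x - z‖), norm_nonneg (y - z)]
  have h5 := mul_le_mul_of_nonneg_left h4 (by positivity : 0 ≤ μ / 4)
  simp only [inner_sub_left, inner_sub_right] at *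
  linarith
end

section
/- Let E be a real inner product space, let f : E → ℝ be differentiable with L-Lipschitz gradient ∇f (L ≥ 0), and let x, u, c ∈ E. Let J ≥ 2 be an integer, η > 0, η_g ≥ 1, and set τ = J·η·η_g. Assume the step-size condition 4τ²L²/(η_g²·J) ≤ 1/(J−1). Define u⁺ = u − η·(∇f(u) − ∇f(x) + c). Then ‖u⁺ − x‖² ≤ (1 + 2/(J−1))·‖u − x‖² + (4τ²/(η_g²·J))·‖c‖². -/
open scoped RealInnerProductSpace

/-- One bias-corrected local step drift recursion (inside Lemma A.2, deterministic case):
with `τ = J·η·η_g` and the step-size condition `4τ²L²/(η_g²J) ≤ 1/(J−1)`, the update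
`u⁺ = u − η(∇f(u) − ∇f(x) + c)` satisfies
`‖u⁺ − x‖² ≤ (1 + 2/(J−1))‖u − x‖² + (4τ²/(η_g²J))‖c‖²`. -/
theorem one_step_drift_recursion
    {E : Type*} [NormedAddCommGroup E] [InnerProductSpace ℝ E]
    (f : E → ℝ) (f' : E → E) (L : ℝ) (hL : 0 ≤ L)
    (hdiff : ∀ y : E, HasFDerivAt f (InnerProductSpace.toDualMap ℝ E (f' y) : E →L[ℝ] ℝ) y)
    (hLip : ∀ x₁ x₂ : E, ‖f' x₁ - f' x₂‖ ≤ L * ‖x₁ - x₂‖)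
    (x u c : E) (J : ℕ) (hJ : 2 ≤ J) (η ηg τ : ℝ)
    (hη : 0 < η) (hηg : 1 ≤ ηg) (hτ : τ = J * η * ηg)
    (hstep : 4 * τ ^ 2 * L ^ 2 / (ηg ^ 2 * J) ≤ 1 / ((J : ℝ) - 1))
    (uplus : E) (hu : uplus = u - η • (f' u - f' x + c)) :
    ‖uplus - x‖ ^ 2 ≤ (1 + 2 / ((J : ℝ) - 1)) * ‖u - x‖ ^ 2
      + 4 * τ ^ 2 / (ηg ^ 2 * J) * ‖c‖ ^ 2 := by
  have hJ' : (2:ℝ) ≤ J := by exact_mod_cast hJ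
  have hg : ηg ≠ 0 := by linarith
  have hJ0 : (J:ℝ) ≠ 0 := by linarith
  have e1 : 4 * τ ^ 2 / (ηg ^ 2 * J) = 4 * J * η ^ 2 := by
    rw [hτ]; field_simp
  have e2 : 4 * τ ^ 2 * L ^ 2 / (ηg ^ 2 * J) = 4 * J * η ^ 2 * L ^ 2 := by
    rw [hτ]; field_simp
  rw [e2] at hstep
  rw [e1]
  have hn : ‖uplus - x‖ ≤ ‖u - x‖ + (η * (L * ‖u - x‖) + η * ‖c‖) := by
    have h1 : uplus - x = (u - x) - η • (f' u - f' x + c) := by rw [hu]; abel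
    rw [h1]
    refine (norm_sub_le _ _).trans ?_
    rw [norm_smul, Real.norm_of_nonneg hη.le, ← mul_add]
    have h2 := norm_add_le (f' u - f' x) c
    have h3 := hLip u x
    gcongr
    linarith
  have hsq := pow_le_pow_left₀ (norm_nonneg _) hn 2
  refine hsq.trans ?_
  generalize ‖u - x‖ = a at *
  generalize ‖c‖ = k at *
  obtain ⟨m, hm⟩ : ∃ m : ℝ, m = (J:ℝ) - 1 := ⟨_, rfl⟩
  have hJm : (J:ℝ) = m + 1 := by linarith
  rw [← hm] at hstep ⊢
  rw [hJm] at hstep ⊢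
  have hm0 : 0 < m := by linarith
  set w := η * (L * a) + η * k with hw
  have y1 : (a + w) ^ 2 ≤ (1 + 1 / m) * a ^ 2 + (m + 1) * w ^ 2 := by
    have : (1 + 1 / m) * a ^ 2 + (m + 1) * w ^ 2 - (a + w) ^ 2 = (a - m * w) ^ 2 / m := by
      field_simp; ring
    have h0 : 0 ≤ (a - m * w) ^ 2 / m := by positivity
    linarith
  have y2 : w ^ 2 ≤ 2 * (η * (L * a)) ^ 2 + 2 * (η * k) ^ 2 := by
    nlinarith [sq_nonneg (η * (L * a) - η * k)]
  have y3 := mul_le_mul_of_nonneg_left y2 (by linarith : 0 ≤ m + 1)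
  have y4 := mul_le_mul_of_nonneg_right hstep (sq_nonneg a)
  have y5 : 0 ≤ (m + 1) * (η * k) ^ 2 := by positivity
  have y6 : 0 ≤ (m + 1) * (η * (L * a)) ^ 2 := by positivity
  have y7 : 2 / m = 2 * (1 / m) := by ring
  rw [y7]
  nlinarith
end

section
/- Let E be a real inner product space, let f : E → ℝ be differentiable with L-Lipschitz gradient ∇f (L ≥ 0), and let x, c ∈ E. Let J ≥ 2 be an integer, η > 0, η_g ≥ 1, and set τ = J·η·η_g. Assume 4τ²L²/(η_g²·J) ≤ 1/(J−1). Define the local iterates by u₀ = x and u_j = u_{j−1} − η·(∇f(u_{j−1}) − ∇f(x) + c) for j = 1, …, J. Then for every j with 0 ≤ j ≤ J: ‖u_j − x‖² ≤ (16τ²/η_g²)·‖c‖². -/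
open scoped RealInnerProductSpace

/-- Per-client drift bound (inside Lemma A.2, deterministic case): with `τ = J·η·η_g`
and `4τ²L²/(η_g²J) ≤ 1/(J−1)`, the bias-corrected local iterates
`u₀ = x`, `u_j = u_{j−1} − η(∇f(u_{j−1}) − ∇f(x) + c)` satisfy
`‖u_j − x‖² ≤ (16τ²/η_g²)‖c‖²` for every `0 ≤ j ≤ J`. -/
theorem local_iterate_drift_bound
    {E : Type*} [NormedAddCommGroup E] [InnerProductSpace ℝ E]
    (f : E → ℝ) (f' : E → E) (L : ℝ) (hL : 0 ≤ L)
    (hdiff : ∀ y : E, HasFDerivAt f (InnerProductSpace.toDualMap ℝ E (f' y) : E →L[ℝ] ℝ) y)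
    (hLip : ∀ x₁ x₂ : E, ‖f' x₁ - f' x₂‖ ≤ L * ‖x₁ - x₂‖)
    (x c : E) (J : ℕ) (hJ : 2 ≤ J) (η ηg τ : ℝ)
    (hη : 0 < η) (hηg : 1 ≤ ηg) (hτ : τ = J * η * ηg)
    (hstep : 4 * τ ^ 2 * L ^ 2 / (ηg ^ 2 * J) ≤ 1 / ((J : ℝ) - 1))
    (u : ℕ → E) (hu0 : u 0 = x)
    (hrec : ∀ j, 1 ≤ j → j ≤ J → u j = u (j - 1) - η • (f' (u (j - 1)) - f' x + c)) :
    ∀ j ≤ J, ‖u j - x‖ ^ 2 ≤ 16 * τ ^ 2 / ηg ^ 2 * ‖c‖ ^ 2 := by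
  have hJ2 : (2:ℝ) ≤ J := by exact_mod_cast hJ
  have hg : 0 < ηg := by linarith
  have haJ : η * L * J ≤ 3 / 4 := by
    have h1 : 4 * τ ^ 2 * L ^ 2 / (ηg ^ 2 * J) = 4 * J * (η * L) ^ 2 := by
      rw [hτ]; field_simp
    rw [h1, le_div_iff₀ (by linarith)] at hstep
    have h2 : (J:ℝ) * (η * L) ^ 2 * J ≤ J * (η * L) ^ 2 * (2 * (J - 1)) :=
      mul_le_mul_of_nonneg_left (by linarith) (by positivity)
    nlinarith
  have key : ∀ j : ℕ, j ≤ J → ‖u j - x‖ ≤ 4 * η * j * ‖c‖ := by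
    intro j
    induction j with
    | zero => intro _; simp [hu0]
    | succ k ih =>
      intro hk
      have hd := ih (by omega)
      have hkJ : (k:ℝ) ≤ J := by exact_mod_cast (by omega : k ≤ J)
      have hr := hrec (k + 1) (by omega) hk
      rw [Nat.add_sub_cancel] at hr
      have e : u (k + 1) - x = (u k - x) - η • (f' (u k) - f' x + c) := by
        rw [hr]; abel
      have n1 : ‖u (k + 1) - x‖ ≤ ‖u k - x‖ + η * (L * ‖u k - x‖ + ‖c‖) := by
        rw [e]
        refine (norm_sub_le _ _).trans ?_
        rw [norm_smul, Real.norm_of_nonneg hη.le]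
        have := (norm_add_le (f' (u k) - f' x) c).trans
          (add_le_add_left (hLip (u k) x) ‖c‖)
        gcongr
      have n2 : η * L * ‖u k - x‖ ≤ η * L * (4 * η * k * ‖c‖) :=
        mul_le_mul_of_nonneg_left hd (by positivity)
      have n3 : η * L * k ≤ 3 / 4 :=
        (mul_le_mul_of_nonneg_left hkJ (by positivity)).trans haJ
      have n4 : η * L * k * (4 * η * ‖c‖) ≤ 3 / 4 * (4 * η * ‖c‖) :=
        mul_le_mul_of_nonneg_right n3 (by positivity)
      push_cast
      nlinarith
  intro j hj
  have hjJ : (j:ℝ) ≤ J := by exact_mod_cast hj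
  have h : ‖u j - x‖ ≤ 4 * η * J * ‖c‖ := (key j hj).trans (by gcongr)
  have h3 : 16 * τ ^ 2 / ηg ^ 2 * ‖c‖ ^ 2 = (4 * η * J * ‖c‖) ^ 2 := by
    rw [hτ]; field_simp; ring
  rw [h3]
  gcongr
end

section
/- Let E be a real inner product space and let f₁, …, f_N : E → ℝ be differentiable functions whose gradients ∇f_i are all L-Lipschitz (L ≥ 0). Let λ ∈ ℝ^N satisfy λ_i ≥ 0 for all i and Σ_{i=1}^N λ_i = 1. Let x ∈ E and set c = Σ_{i=1}^N λ_i ∇f_i(x). Let J ≥ 2 be an integer, η > 0, η_g ≥ 1, τ = J·η·η_g, and assume 4τ²L²/(η_g²·J) ≤ 1/(J−1). For each i define u_{i,0} = x and u_{i,j} = u_{i,j−1} − η·(∇f_i(u_{i,j−1}) − ∇f_i(x) + c) for j = 1, …, J. Then the drift ℰ := (1/J)·Σ_{i=1}^N Σ_{j=1}^J λ_i ‖u_{i,j} − x‖² satisfies ℰ ≤ (16τ²/η_g²)·‖Σ_{i=1}^N λ_i ∇f_i(x)‖². -/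
open scoped RealInnerProductSpace

/-- Bounded drift lemma (Lemma A.2, deterministic case ζ = 0): with weights `λ` in the
simplex, control variate `c = Σᵢ λᵢ ∇fᵢ(x)`, effective step size `τ = J·η·η_g` and the
step-size condition `4τ²L²/(η_g²J) ≤ 1/(J−1)`, the drift
`ℰ = (1/J) Σᵢ Σ_{j=1}^J λᵢ ‖u_{i,j} − x‖²` of the bias-corrected local iterates satisfies
`ℰ ≤ (16τ²/η_g²)‖Σᵢ λᵢ ∇fᵢ(x)‖²`. -/
theorem bounded_drift
    {E : Type*} [NormedAddCommGroup E] [InnerProductSpace ℝ E]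
    (N : ℕ) (f : Fin N → E → ℝ) (f' : Fin N → E → E) (L : ℝ) (hL : 0 ≤ L)
    (hdiff : ∀ i (y : E),
      HasFDerivAt (f i) (InnerProductSpace.toDualMap ℝ E (f' i y) : E →L[ℝ] ℝ) y)
    (hLip : ∀ i (x₁ x₂ : E), ‖f' i x₁ - f' i x₂‖ ≤ L * ‖x₁ - x₂‖)
    (lam : Fin N → ℝ) (hlam0 : ∀ i, 0 ≤ lam i) (hlam1 : ∑ i, lam i = 1)
    (x c : E) (hc : c = ∑ i, lam i • f' i x)
    (J : ℕ) (hJ : 2 ≤ J) (η ηg τ : ℝ)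
    (hη : 0 < η) (hηg : 1 ≤ ηg) (hτ : τ = J * η * ηg)
    (hstep : 4 * τ ^ 2 * L ^ 2 / (ηg ^ 2 * J) ≤ 1 / ((J : ℝ) - 1))
    (u : Fin N → ℕ → E) (hu0 : ∀ i, u i 0 = x)
    (hrec : ∀ i, ∀ j < J, u i (j + 1) = u i j - η • (f' i (u i j) - f' i x + c)) :
    (1 / (J : ℝ)) * ∑ i, ∑ j ∈ Finset.range J, lam i * ‖u i (j + 1) - x‖ ^ 2
      ≤ 16 * τ ^ 2 / ηg ^ 2 * ‖∑ i, lam i • f' i x‖ ^ 2 := by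
  have hJ' : (2:ℝ) ≤ J := by exact_mod_cast hJ
  have hg : 0 < ηg := by linarith
  have hJ1 : (0:ℝ) < (J:ℝ) - 1 := by linarith
  have hJ0 : (0:ℝ) < (J:ℝ) := by linarith
  have e1 : 4 * τ ^ 2 * L ^ 2 / (ηg ^ 2 * J) = 4 * J * (η * L) ^ 2 := by
    rw [hτ]; field_simp
  have e2 : τ ^ 2 = (J * η) ^ 2 * ηg ^ 2 := by rw [hτ]; ring
  have e3 : 16 * τ ^ 2 / ηg ^ 2 = 16 * (J * η) ^ 2 := by
    rw [e2]; field_simp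
  have ha0 : 0 ≤ η * L := by positivity
  rw [e1, le_div_iff₀ hJ1] at hstep
  have ha : η * L * ((J:ℝ) - 1) ≤ 1 / 2 := by
    have h1 : (η * L * ((J:ℝ) - 1)) ^ 2 ≤ (1 / 2) ^ 2 := by
      have h2 : 0 ≤ (η * L) ^ 2 * ((J:ℝ) - 1) := by positivity
      nlinarith
    exact le_of_sq_le_sq h1 (by norm_num)
  have key : ∀ i, ∀ j ≤ J, ‖u i j - x‖ ≤ 4 * j * (η * ‖c‖) := by
    intro i j
    induction j with
    | zero => intro _; simp [hu0]
    | succ j ih =>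
      intro hj
      have h1 := ih (by omega)
      have hjJ : (j:ℝ) ≤ (J:ℝ) - 1 := by
        have : ((j + 1 : ℕ) : ℝ) ≤ J := by exact_mod_cast hj
        push_cast at this
        linarith
      have h2 : u i (j+1) - x = (u i j - x) - η • (f' i (u i j) - f' i x) - η • c := by
        rw [hrec i j (by omega), smul_add]; abel
      have h3 : ‖u i (j+1) - x‖ ≤ ‖u i j - x‖ + η * ‖f' i (u i j) - f' i x‖ + η * ‖c‖ := by
        rw [h2]
        refine (norm_sub_le _ _).trans ?_
        have := norm_sub_le (u i j - x) (η • (f' i (u i j) - f' i x))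
        rw [norm_smul, Real.norm_of_nonneg hη.le] at *
        linarith
      have h4 : η * ‖f' i (u i j) - f' i x‖ ≤ η * L * ‖u i j - x‖ := by
        rw [mul_assoc]
        exact mul_le_mul_of_nonneg_left (hLip i _ _) hη.le
      have h5 : η * L * ‖u i j - x‖ ≤ η * L * (4 * j * (η * ‖c‖)) :=
        mul_le_mul_of_nonneg_left h1 ha0
      have h6 : η * L * j ≤ 1 / 2 := (mul_le_mul_of_nonneg_left hjJ ha0).trans ha
      have h7 : 0 ≤ η * ‖c‖ := by positivity
      have h8 : η * L * j * (η * ‖c‖) ≤ 1 / 2 * (η * ‖c‖) := mul_le_mul_of_nonneg_right h6 h7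
      push_cast
      nlinarith
  rw [← hc, e3]
  have hb : ∀ i, ∀ j ∈ Finset.range J, lam i * ‖u i (j + 1) - x‖ ^ 2
      ≤ lam i * (16 * (J * η) ^ 2 * ‖c‖ ^ 2) := by
    intro i j hj
    have hj' : j + 1 ≤ J := Finset.mem_range.mp hj
    have h1 := key i (j+1) hj'
    have h2 : ((j + 1 : ℕ) : ℝ) ≤ J := by exact_mod_cast hj'
    have h3 : ‖u i (j + 1) - x‖ ≤ 4 * J * (η * ‖c‖) := h1.trans (by gcongr)
    refine mul_le_mul_of_nonneg_left ?_ (hlam0 i)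
    calc ‖u i (j + 1) - x‖ ^ 2 ≤ (4 * J * (η * ‖c‖)) ^ 2 := by gcongr
      _ = _ := by ring
  calc (1 / (J : ℝ)) * ∑ i, ∑ j ∈ Finset.range J, lam i * ‖u i (j + 1) - x‖ ^ 2
      ≤ (1 / (J : ℝ)) * ∑ i, ∑ j ∈ Finset.range J, lam i * (16 * (J * η) ^ 2 * ‖c‖ ^ 2) := by
        refine mul_le_mul_of_nonneg_left ?_ (by positivity)
        exact Finset.sum_le_sum fun i _ => Finset.sum_le_sum (hb i)
    _ = 16 * (J * η) ^ 2 * ‖c‖ ^ 2 := by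
        simp only [Finset.sum_const, Finset.card_range, nsmul_eq_mul]
        rw [← Finset.mul_sum, ← Finset.sum_mul, hlam1]
        field_simp
end

section
/- Let E be a real inner product space and let f₁, …, f_N : E → ℝ be differentiable functions whose gradients ∇f_i are all L-Lipschitz (L ≥ 0). Let λ ∈ ℝ^N satisfy λ_i ≥ 0 for all i and Σ_{i=1}^N λ_i = 1. Let x ∈ E, let J ≥ 1 be an integer, and let v_{i,j} ∈ E be arbitrary points for i = 1, …, N and j = 1, …, J. Define d = (1/J)·Σ_{i=1}^N Σ_{j=1}^J λ_i ∇f_i(v_{i,j}) and ℰ = (1/J)·Σ_{i=1}^N Σ_{j=1}^J λ_i ‖v_{i,j} − x‖². Then ‖d‖² ≥ −L²·ℰ + (1/2)·‖Σ_{i=1}^N λ_i ∇f_i(x)‖². -/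
open scoped RealInnerProductSpace

/-- Lemma A.3 (deterministic content): the squared aggregated update
`d = (1/J) Σᵢ Σⱼ λᵢ ∇fᵢ(v_{i,j})` is lower bounded by half the true gradient norm minus
an `L²`-weighted drift term: `‖d‖² ≥ −L²ℰ + (1/2)‖Σᵢ λᵢ ∇fᵢ(x)‖²`. -/
theorem aggregate_update_lower_bound
    {E : Type*} [NormedAddCommGroup E] [InnerProductSpace ℝ E]
    (N : ℕ) (f : Fin N → E → ℝ) (f' : Fin N → E → E) (L : ℝ) (hL : 0 ≤ L)
    (hdiff : ∀ i (y : E),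
      HasFDerivAt (f i) (InnerProductSpace.toDualMap ℝ E (f' i y) : E →L[ℝ] ℝ) y)
    (hLip : ∀ i (x₁ x₂ : E), ‖f' i x₁ - f' i x₂‖ ≤ L * ‖x₁ - x₂‖)
    (lam : Fin N → ℝ) (hlam0 : ∀ i, 0 ≤ lam i) (hlam1 : ∑ i, lam i = 1)
    (x : E) (J : ℕ) (hJ : 1 ≤ J) (v : Fin N → Fin J → E)
    (d : E) (hd : d = (1 / (J : ℝ)) • ∑ i, ∑ j, lam i • f' i (v i j))
    (ℰ : ℝ) (hE : ℰ = (1 / (J : ℝ)) * ∑ i, ∑ j, lam i * ‖v i j - x‖ ^ 2) :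
    ‖d‖ ^ 2 ≥ -(L ^ 2) * ℰ + 1 / 2 * ‖∑ i, lam i • f' i x‖ ^ 2 := by
  have hJ0 : (0 : ℝ) < J := by exact_mod_cast hJ
  have hJn : (J : ℝ) ≠ 0 := hJ0.ne'
  have hg : ∑ i, lam i • f' i x = (1 / (J : ℝ)) • ∑ i, ∑ _j : Fin J, lam i • f' i x := by
    simp only [Finset.sum_const, Finset.card_univ, Fintype.card_fin, ← Nat.cast_smul_eq_nsmul ℝ]
    rw [← Finset.smul_sum, smul_smul, one_div, inv_mul_cancel₀ hJn, one_smul]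
  have hS2 : ((1 / (J : ℝ)) * ∑ i, ∑ j, lam i * ‖v i j - x‖) ^ 2 ≤ ℰ := by
    have h := Real.pow_arith_mean_le_arith_mean_pow (Finset.univ : Finset (Fin N × Fin J))
      (fun p => (1 / (J : ℝ)) * lam p.1) (fun p => ‖v p.1 p.2 - x‖)
      (fun p _ => mul_nonneg (by positivity) (hlam0 _))
      (by
        rw [Fintype.sum_prod_type]
        simp only [Finset.sum_const, Finset.card_univ, Fintype.card_fin, nsmul_eq_mul]
        rw [← Finset.mul_sum, ← Finset.mul_sum, hlam1]
        field_simp)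
      (fun p _ => norm_nonneg _) 2
    simp only [Fintype.sum_prod_type, mul_assoc, ← Finset.mul_sum] at h
    rw [hE]
    simpa only [Finset.mul_sum] using h
  have hdiffn : ‖d - ∑ i, lam i • f' i x‖
      ≤ L * ((1 / (J : ℝ)) * ∑ i, ∑ j, lam i * ‖v i j - x‖) := by
    rw [hg, hd, ← smul_sub, ← Finset.sum_sub_distrib, norm_smul, Real.norm_of_nonneg (by positivity),
      mul_left_comm]
    refine mul_le_mul_of_nonneg_left ?_ (by positivity)
    rw [Finset.mul_sum]
    refine norm_sum_le_of_le _ fun i _ => ?_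
    rw [← Finset.sum_sub_distrib, Finset.mul_sum]
    refine norm_sum_le_of_le _ fun j _ => ?_
    rw [← smul_sub, norm_smul, Real.norm_of_nonneg (hlam0 i), mul_left_comm]
    exact mul_le_mul_of_nonneg_left (hLip i _ _) (hlam0 i)
  have h1 : ‖d - ∑ i, lam i • f' i x‖ ^ 2 ≤ L ^ 2 * ℰ := by
    calc _ ≤ (L * ((1 / (J : ℝ)) * ∑ i, ∑ j, lam i * ‖v i j - x‖)) ^ 2 :=
          pow_le_pow_left₀ (norm_nonneg _) hdiffn 2
      _ ≤ _ := by rw [mul_pow]; exact mul_le_mul_of_nonneg_left hS2 (sq_nonneg L)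
  have h2 : ‖∑ i, lam i • f' i x‖ ≤ ‖d‖ + ‖d - ∑ i, lam i • f' i x‖ := by
    have := norm_sub_le d (d - ∑ i, lam i • f' i x)
    rwa [sub_sub_cancel] at this
  nlinarith [pow_le_pow_left₀ (norm_nonneg _) h2 2,
    sq_nonneg (‖d‖ - ‖d - ∑ i, lam i • f' i x‖)]
end

section
/- Let H be a real inner product space, let Λ ⊆ H be a nonempty convex set, let μ ≥ 0, and let ψ : H → ℝ be μ-strongly convex on Λ, i.e. ψ(t·a + (1−t)·b) ≤ t·ψ(a) + (1−t)·ψ(b) − (μ/2)·t·(1−t)·‖a − b‖² for all a, b ∈ Λ and t ∈ [0,1]. Let s ∈ H, λ₀ ∈ H, σ > 0, and let λ⁺ ∈ Λ be a minimizer over Λ of the function λ ↦ ψ(λ) − ⟨s, λ⟩ + ‖λ − λ₀‖²/(2σ). Then for every λ ∈ Λ: ψ(λ⁺) − ⟨s, λ⁺⟩ ≤ ψ(λ) − ⟨s, λ⟩ + (1/(2σ))·(‖λ − λ₀‖² − ‖λ − λ⁺‖² − ‖λ⁺ − λ₀‖²) − (μ/2)·‖λ⁺ − λ‖². -/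
open scoped RealInnerProductSpace

/-- Three-point prox inequality (Lemma A.4): if `λ⁺` minimizes
`λ ↦ ψ(λ) − ⟪s, λ⟫ + ‖λ − λ₀‖²/(2σ)` over the convex set `Λ`, where `ψ` is `μ`-strongly
convex on `Λ`, then for every `λ ∈ Λ`,
`ψ(λ⁺) − ⟪s, λ⁺⟫ ≤ ψ(λ) − ⟪s, λ⟫ + (1/(2σ))(‖λ − λ₀‖² − ‖λ − λ⁺‖² − ‖λ⁺ − λ₀‖²)
  − (μ/2)‖λ⁺ − λ‖²`. -/
theorem three_point_prox_inequality
    {H : Type*} [NormedAddCommGroup H] [InnerProductSpace ℝ H]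
    (Λ : Set H) (hΛne : Λ.Nonempty) (hΛconv : Convex ℝ Λ)
    (μ : ℝ) (hμ : 0 ≤ μ) (ψ : H → ℝ)
    (hsc : ∀ a ∈ Λ, ∀ b ∈ Λ, ∀ t : ℝ, 0 ≤ t → t ≤ 1 →
      ψ (t • a + (1 - t) • b) ≤
        t * ψ a + (1 - t) * ψ b - μ / 2 * (t * (1 - t)) * ‖a - b‖ ^ 2)
    (s lam₀ : H) (σ : ℝ) (hσ : 0 < σ)
    (lamp : H) (hmem : lamp ∈ Λ)
    (hmin : ∀ lam ∈ Λ, ψ lamp - ⟪s, lamp⟫ + ‖lamp - lam₀‖ ^ 2 / (2 * σ) ≤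
      ψ lam - ⟪s, lam⟫ + ‖lam - lam₀‖ ^ 2 / (2 * σ)) :
    ∀ lam ∈ Λ, ψ lamp - ⟪s, lamp⟫ ≤ ψ lam - ⟪s, lam⟫
      + 1 / (2 * σ) * (‖lam - lam₀‖ ^ 2 - ‖lam - lamp‖ ^ 2 - ‖lamp - lam₀‖ ^ 2)
      - μ / 2 * ‖lamp - lam‖ ^ 2 := by
  intro lam hlam
  have key : ∀ t : ℝ, 0 < t → t ≤ 1 →
      (1 - t) * ((μ / 2 + 1 / (2 * σ)) * ‖lam - lamp‖ ^ 2) ≤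
        (ψ lam - ⟪s, lam⟫ + ‖lam - lam₀‖ ^ 2 / (2 * σ)) -
        (ψ lamp - ⟪s, lamp⟫ + ‖lamp - lam₀‖ ^ 2 / (2 * σ)) := by
    intro t ht ht1
    have h1 := hsc lam hlam lamp hmem t ht.le ht1
    have h2 := hmin _ (hΛconv hlam hmem ht.le (sub_nonneg.2 ht1) (by ring))
    have h3 : ‖t • lam + (1 - t) • lamp - lam₀‖ ^ 2 =
        t * ‖lam - lam₀‖ ^ 2 + (1 - t) * ‖lamp - lam₀‖ ^ 2
          - t * (1 - t) * ‖lam - lamp‖ ^ 2 := by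
      have e1 : t • lam + (1 - t) • lamp - lam₀ =
          t • (lam - lam₀) + (1 - t) • (lamp - lam₀) := by module
      have e2 : lam - lamp = (lam - lam₀) - (lamp - lam₀) := by abel
      rw [e1, e2, norm_add_sq_real, norm_sub_sq_real (lam - lam₀) (lamp - lam₀), norm_smul, norm_smul,
        real_inner_smul_left, real_inner_smul_right, mul_pow, mul_pow,
        Real.norm_eq_abs, Real.norm_eq_abs, sq_abs, sq_abs]
      ring
    rw [h3, inner_add_right, real_inner_smul_right, real_inner_smul_right] at h2
    refine le_of_mul_le_mul_left ?_ ht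
    simp only [div_eq_mul_inv] at *
    linarith
  have hK : (μ / 2 + 1 / (2 * σ)) * ‖lam - lamp‖ ^ 2 ≤
        (ψ lam - ⟪s, lam⟫ + ‖lam - lam₀‖ ^ 2 / (2 * σ)) -
        (ψ lamp - ⟪s, lamp⟫ + ‖lamp - lam₀‖ ^ 2 / (2 * σ)) := by
    generalize (μ / 2 + 1 / (2 * σ)) * ‖lam - lamp‖ ^ 2 = K at *
    generalize (ψ lam - ⟪s, lam⟫ + ‖lam - lam₀‖ ^ 2 / (2 * σ)) -
        (ψ lamp - ⟪s, lamp⟫ + ‖lamp - lam₀‖ ^ 2 / (2 * σ)) = D at *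
    by_contra hc
    have hc : D < K := not_le.1 hc
    have hD : 0 ≤ D := by simpa using key 1 one_pos le_rfl
    have hK0 : 0 < K := by linarith
    have h := key ((K - D) / (2 * K)) (div_pos (by linarith) (by linarith))
      ((div_le_one (by linarith)).2 (by linarith))
    have e : (1 - (K - D) / (2 * K)) * K = (K + D) / 2 := by
      field_simp
      ring
    linarith
  rw [norm_sub_rev lamp lam]
  simp only [div_eq_mul_inv] at *
  linarith
end

section
/- Let E be a real inner product space and let f₁, …, f_N : E → ℝ be differentiable functions that are each μ-strongly convex (μ ≥ 0) and whose gradients ∇f_i are all L-Lipschitz (L ≥ 0). Let λ ∈ ℝ^N satisfy λ_i ≥ 0 for all i and Σ_{i=1}^N λ_i = 1. Let x_r, x ∈ E, let J ≥ 1 be an integer, and let v_{i,j} ∈ E be arbitrary points for i = 1, …, N and j = 1, …, J. Define d = (1/J)·Σ_{i=1}^N Σ_{j=1}^J λ_i ∇f_i(v_{i,j}) and ℰ = (1/J)·Σ_{i=1}^N Σ_{j=1}^J λ_i ‖v_{i,j} − x_r‖². Then ⟨d, x_r − x⟩ ≥ Σ_{i=1}^N λ_i f_i(x_r) − Σ_{i=1}^N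 λ_i f_i(x) + (μ/4)·‖x_r − x‖² − L·ℰ. -/
open scoped RealInnerProductSpace

/-- Lower bound on the term T₁ in Lemma A.5: for the aggregated update
`d = (1/J) Σᵢ Σⱼ λᵢ ∇fᵢ(v_{i,j})` of `μ`-strongly convex, `L`-smooth local objectives,
`⟪d, x_r − x⟫ ≥ Σᵢ λᵢ fᵢ(x_r) − Σᵢ λᵢ fᵢ(x) + (μ/4)‖x_r − x‖² − L·ℰ`. -/
theorem T1_lower_bound
    {E : Type*} [NormedAddCommGroup E] [InnerProductSpace ℝ E]
    (N : ℕ) (f : Fin N → E → ℝ) (f' : Fin N → E → E) (L μ : ℝ)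
    (hL : 0 ≤ L) (hμ : 0 ≤ μ)
    (hdiff : ∀ i (y : E),
      HasFDerivAt (f i) (InnerProductSpace.toDualMap ℝ E (f' i y) : E →L[ℝ] ℝ) y)
    (hLip : ∀ i (x₁ x₂ : E), ‖f' i x₁ - f' i x₂‖ ≤ L * ‖x₁ - x₂‖)
    (hsc : ∀ i (a b : E), f i b ≥ f i a + ⟪f' i a, b - a⟫ + μ / 2 * ‖b - a‖ ^ 2)
    (lam : Fin N → ℝ) (hlam0 : ∀ i, 0 ≤ lam i) (hlam1 : ∑ i, lam i = 1)
    (xr x : E) (J : ℕ) (hJ : 1 ≤ J) (v : Fin N → Fin J → E)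
    (d : E) (hd : d = (1 / (J : ℝ)) • ∑ i, ∑ j, lam i • f' i (v i j))
    (ℰ : ℝ) (hE : ℰ = (1 / (J : ℝ)) * ∑ i, ∑ j, lam i * ‖v i j - xr‖ ^ 2) :
    ⟪d, xr - x⟫ ≥ (∑ i, lam i * f i xr) - (∑ i, lam i * f i x)
      + μ / 4 * ‖xr - x‖ ^ 2 - L * ℰ := by
  have key : ∀ i (w : E), f i xr - f i x + μ / 4 * ‖xr - x‖ ^ 2 - L * ‖w - xr‖ ^ 2
      ≤ ⟪f' i w, xr - x⟫ := by
    intro i w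
    have h1 := hsc i xr w
    have h2 := hsc i w x
    have h3 : -(L * ‖w - xr‖ ^ 2) ≤ ⟪f' i xr - f' i w, w - xr⟫ := by
      have a := neg_le_of_abs_le (abs_real_inner_le_norm (f' i xr - f' i w) (w - xr))
      have b := hLip i xr w
      rw [norm_sub_rev xr w] at b
      have c := mul_le_mul_of_nonneg_right b (norm_nonneg (w - xr))
      nlinarith
    have h4 : ⟪f' i xr - f' i w, w - xr⟫ =
        ⟪f' i xr, w - xr⟫ + ⟪f' i w, x - w⟫ + ⟪f' i w, xr - x⟫ := by
      simp only [inner_sub_left, inner_sub_right]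
      ring
    have h5 : ‖xr - x‖ ^ 2 ≤ 2 * ‖w - xr‖ ^ 2 + 2 * ‖x - w‖ ^ 2 := by
      have t : ‖xr - x‖ ≤ ‖w - xr‖ + ‖x - w‖ := by
        have := norm_add_le (w - xr) (x - w)
        rwa [sub_add_sub_cancel', norm_sub_rev x xr] at this
      have := norm_nonneg (xr - x)
      nlinarith [sq_nonneg (‖w - xr‖ - ‖x - w‖)]
    have h6 := mul_le_mul_of_nonneg_left h5 (by linarith : 0 ≤ μ / 4)
    linarith
  have hJ0 : (J : ℝ) ≠ 0 := by
    have : J ≠ 0 := by omega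
    exact_mod_cast this
  have hsum : ∑ i, ∑ _j : Fin J, lam i * (f i xr - f i x + μ / 4 * ‖xr - x‖ ^ 2)
      - L * ∑ i, ∑ j, lam i * ‖v i j - xr‖ ^ 2
      ≤ ∑ i, ∑ j, lam i * ⟪f' i (v i j), xr - x⟫ := by
    simp only [Finset.mul_sum, ← Finset.sum_sub_distrib]
    refine Finset.sum_le_sum fun i _ => Finset.sum_le_sum fun j _ => ?_
    have := mul_le_mul_of_nonneg_left (key i (v i j)) (hlam0 i)
    linarith
  have hconst : ∑ i, ∑ _j : Fin J, lam i * (f i xr - f i x + μ / 4 * ‖xr - x‖ ^ 2)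
      = J * ((∑ i, lam i * f i xr) - (∑ i, lam i * f i x) + μ / 4 * ‖xr - x‖ ^ 2) := by
    simp only [Finset.sum_const, Finset.card_univ, Fintype.card_fin, nsmul_eq_mul,
      ← Finset.mul_sum, mul_add, mul_sub, Finset.sum_add_distrib, Finset.sum_sub_distrib,
      ← Finset.sum_mul, hlam1]
    ring
  rw [hconst] at hsum
  have hd' : ⟪d, xr - x⟫ = (1 / (J : ℝ)) * ∑ i, ∑ j, lam i * ⟪f' i (v i j), xr - x⟫ := by
    rw [hd]
    simp only [real_inner_smul_left, sum_inner]
  have h := mul_le_mul_of_nonneg_left hsum (by positivity : 0 ≤ 1 / (J : ℝ))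
  rw [hd', hE]
  refine ge_iff_le.mpr (le_trans (le_of_eq ?_) h)
  field_simp
end

section
/- Let E be a real inner product space and let f₁, …, f_N : E → ℝ be differentiable functions that are each μ-strongly convex (μ ≥ 0) and whose gradients ∇f_i are all L-Lipschitz (L ≥ 0). Let λ ∈ ℝ^N satisfy λ_i ≥ 0 for all i and Σ_{i=1}^N λ_i = 1. Let x_r, x⁺ ∈ E, let J ≥ 1 be an integer, and let v_{i,j} ∈ E be arbitrary points for i = 1, …, N and j = 1, …, J. Define d = (1/J)·Σ_{i=1}^N Σ_{j=1}^J λ_i ∇f_i(v_{i,j}) and ℰ = (1/J)·Σ_{i=1}^N Σ_{j=1}^J λ_i ‖v_{i,j} − x_r‖². Then ⟨d, x⁺ − x_r⟩ ≥ Σ_{i=1}^N λ_i f_i(x⁺) − Σ_{i=1}^N λ_i f_i(x_r) + (μ/4 − 2L)·‖x⁺ − x_r‖² − 2L·ℰ. -/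
open scoped RealInnerProductSpace

/-- Lower bound on the term T₂ in Lemma A.5: for the aggregated update
`d = (1/J) Σᵢ Σⱼ λᵢ ∇fᵢ(v_{i,j})` of `μ`-strongly convex, `L`-smooth local objectives,
`⟪d, x⁺ − x_r⟫ ≥ Σᵢ λᵢ fᵢ(x⁺) − Σᵢ λᵢ fᵢ(x_r) + (μ/4 − 2L)‖x⁺ − x_r‖² − 2L·ℰ`. -/
theorem T2_lower_bound
    {E : Type*} [NormedAddCommGroup E] [InnerProductSpace ℝ E]
    (N : ℕ) (f : Fin N → E → ℝ) (f' : Fin N → E → E) (L μ : ℝ)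
    (hL : 0 ≤ L) (hμ : 0 ≤ μ)
    (hdiff : ∀ i (y : E),
      HasFDerivAt (f i) (InnerProductSpace.toDualMap ℝ E (f' i y) : E →L[ℝ] ℝ) y)
    (hLip : ∀ i (x₁ x₂ : E), ‖f' i x₁ - f' i x₂‖ ≤ L * ‖x₁ - x₂‖)
    (hsc : ∀ i (a b : E), f i b ≥ f i a + ⟪f' i a, b - a⟫ + μ / 2 * ‖b - a‖ ^ 2)
    (lam : Fin N → ℝ) (hlam0 : ∀ i, 0 ≤ lam i) (hlam1 : ∑ i, lam i = 1)
    (xr xplus : E) (J : ℕ) (hJ : 1 ≤ J) (v : Fin N → Fin J → E)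
    (d : E) (hd : d = (1 / (J : ℝ)) • ∑ i, ∑ j, lam i • f' i (v i j))
    (ℰ : ℝ) (hE : ℰ = (1 / (J : ℝ)) * ∑ i, ∑ j, lam i * ‖v i j - xr‖ ^ 2) :
    ⟪d, xplus - xr⟫ ≥ (∑ i, lam i * f i xplus) - (∑ i, lam i * f i xr)
      + (μ / 4 - 2 * L) * ‖xplus - xr‖ ^ 2 - 2 * L * ℰ := by
  have hJ0 : (0 : ℝ) < J := by exact_mod_cast hJ
  have key : ∀ i j, f i xplus - f i xr + (μ / 4 - 2 * L) * ‖xplus - xr‖ ^ 2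
      - 2 * L * ‖v i j - xr‖ ^ 2 ≤ ⟪f' i (v i j), xplus - xr⟫ := by
    intro i j
    have h1 := hsc i xplus xr
    have e1 : ⟪f' i xplus, xr - xplus⟫ = -⟪f' i xplus, xplus - xr⟫ := by
      rw [← inner_neg_right, neg_sub]
    rw [e1, norm_sub_rev xr xplus] at h1
    have h2 : ⟪f' i xplus - f' i (v i j), xplus - xr⟫
        ≤ L * ‖xplus - v i j‖ * ‖xplus - xr‖ :=
      (real_inner_le_norm _ _).trans
        (mul_le_mul_of_nonneg_right (hLip i _ _) (norm_nonneg _))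
    rw [inner_sub_left] at h2
    have h3 : ‖xplus - v i j‖ ≤ ‖xplus - xr‖ + ‖v i j - xr‖ := by
      have := norm_sub_le (xplus - xr) (v i j - xr)
      simpa using this
    have hD := norm_nonneg (xplus - xr)
    generalize ‖xplus - xr‖ = D at *
    generalize ‖v i j - xr‖ = e at *
    have h4 : L * ‖xplus - v i j‖ * D ≤ L * (D + e) * D := by gcongr
    have h5 : L * (D + e) * D ≤ L * (2 * D ^ 2 + 2 * e ^ 2) := by
      rw [mul_assoc]
      apply mul_le_mul_of_nonneg_left _ hL
      nlinarith [sq_nonneg (D - e), sq_nonneg D, sq_nonneg e]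
    have h6 : 0 ≤ μ * D ^ 2 := by positivity
    nlinarith
  have hsum : ∑ i, ∑ j, lam i * (f i xplus - f i xr + (μ / 4 - 2 * L) * ‖xplus - xr‖ ^ 2
      - 2 * L * ‖v i j - xr‖ ^ 2) ≤ ∑ i, ∑ j, lam i * ⟪f' i (v i j), xplus - xr⟫ :=
    Finset.sum_le_sum fun i _ => Finset.sum_le_sum fun j _ =>
      mul_le_mul_of_nonneg_left (key i j) (hlam0 i)
  have hl : ⟪d, xplus - xr⟫ = (1 / (J : ℝ)) * ∑ i, ∑ j, lam i * ⟪f' i (v i j), xplus - xr⟫ := by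
    rw [hd, real_inner_smul_left, sum_inner]
    simp_rw [sum_inner, real_inner_smul_left]
  have hr : ∑ i, ∑ j, lam i * (f i xplus - f i xr + (μ / 4 - 2 * L) * ‖xplus - xr‖ ^ 2
      - 2 * L * ‖v i j - xr‖ ^ 2) = J * ((∑ i, lam i * f i xplus) - (∑ i, lam i * f i xr)
      + (μ / 4 - 2 * L) * ‖xplus - xr‖ ^ 2) - 2 * L * ∑ i, ∑ j, lam i * ‖v i j - xr‖ ^ 2 := by
    have : (μ / 4 - 2 * L) * ‖xplus - xr‖ ^ 2
        = ∑ i, lam i * ((μ / 4 - 2 * L) * ‖xplus - xr‖ ^ 2) := by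
      rw [← Finset.sum_mul, hlam1, one_mul]
    generalize (μ / 4 - 2 * L) * ‖xplus - xr‖ ^ 2 = c at *
    conv_rhs => rw [this]
    rw [← Finset.sum_sub_distrib, ← Finset.sum_add_distrib, Finset.mul_sum, Finset.mul_sum,
      ← Finset.sum_sub_distrib]
    refine Finset.sum_congr rfl fun i _ => ?_
    rw [← Finset.mul_sum, Finset.sum_sub_distrib, ← Finset.mul_sum, ← Finset.mul_sum]
    simp
    ring
  rw [hl, hE, ge_iff_le]
  rw [hr] at hsum
  have h7 := mul_le_mul_of_nonneg_left hsum (one_div_pos.mpr hJ0).le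
  refine le_trans (le_of_eq ?_) h7
  field_simp
end

section
/- Let μ > 0, τ₀ > 0, γ₀ > 0 with μ·τ₀ ≤ 1. Define sequences by γ(0) = γ₀, τ_r = τ₀·√(γ₀/γ_r), γ_{r+1} = γ_r·(1 + μ·τ_r), and σ_r = γ_r·τ_r. Then every γ_r is positive, and for all r ∈ ℕ: (i) γ_r ≥ (μ²·τ₀²·γ₀/9)·r²; (ii) σ_r = τ₀·√(γ₀·γ_r), and hence σ_r ≥ (μ·τ₀²·γ₀/3)·r; (iii) τ_r·σ_r = τ₀²·γ₀; (iv) τ_r/σ_r = 1/γ_r. -/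
/-- Lemma A.7: for the step-size recursion `γ₀ > 0`, `τ_r = τ₀√(γ₀/γ_r)`,
`γ_{r+1} = γ_r(1 + μ τ_r)`, `σ_r = γ_r τ_r`, with `μ τ₀ ≤ 1`, every `γ_r` is positive and
(i) `γ_r ≥ (μ²τ₀²γ₀/9) r²`, (ii) `σ_r = τ₀√(γ₀ γ_r)` hence `σ_r ≥ (μτ₀²γ₀/3) r`,
(iii) `τ_r σ_r = τ₀² γ₀`, (iv) `τ_r/σ_r = 1/γ_r`. -/
theorem scc_stepsize_growth
    (μ τ₀ γ₀ : ℝ) (hμ : 0 < μ) (hτ₀ : 0 < τ₀) (hγ₀ : 0 < γ₀) (hμτ : μ * τ₀ ≤ 1)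
    (γ τ σ : ℕ → ℝ) (hγ0 : γ 0 = γ₀)
    (hτ : ∀ r, τ r = τ₀ * Real.sqrt (γ₀ / γ r))
    (hγrec : ∀ r, γ (r + 1) = γ r * (1 + μ * τ r))
    (hσ : ∀ r, σ r = γ r * τ r) :
    ∀ r : ℕ,
      0 < γ r
      ∧ γ r ≥ μ ^ 2 * τ₀ ^ 2 * γ₀ / 9 * (r : ℝ) ^ 2
      ∧ σ r = τ₀ * Real.sqrt (γ₀ * γ r)
      ∧ σ r ≥ μ * τ₀ ^ 2 * γ₀ / 3 * (r : ℝ)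
      ∧ τ r * σ r = τ₀ ^ 2 * γ₀
      ∧ τ r / σ r = 1 / γ r := by
  have ha : 0 < μ * τ₀ := mul_pos hμ hτ₀
  obtain ⟨s, hs, hss⟩ : ∃ s : ℝ, 0 < s ∧ γ₀ = s ^ 2 :=
    ⟨Real.sqrt γ₀, Real.sqrt_pos.2 hγ₀, (Real.sq_sqrt hγ₀.le).symm⟩
  have hτg : ∀ r (g : ℝ), 0 < g → γ r = g ^ 2 → τ r = τ₀ * (s / g) := by
    intro r g hg h
    rw [hτ, h, hss, ← div_pow, Real.sqrt_sq (by positivity)]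
  have key : ∀ r : ℕ, ∃ g : ℝ, s * (1 + μ * τ₀ * r / 3) ≤ g ∧ γ r = g ^ 2 := by
    intro r
    induction r with
    | zero => exact ⟨s, by simp, by rw [hγ0, hss]⟩
    | succ r ih =>
      obtain ⟨g, hg, h⟩ := ih
      have hsr : 0 ≤ s * (μ * τ₀ * r / 3) := by positivity
      have hsg : s ≤ g := by linarith
      have hg0 : 0 < g := by linarith
      have h1 : γ (r + 1) = g ^ 2 + μ * τ₀ * s * g := by
        rw [hγrec, hτg r g hg0 h, h]
        field_simp
      have hp : 0 < μ * τ₀ * s := by positivity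
      have hle : μ * τ₀ * s ≤ g := by nlinarith
      refine ⟨Real.sqrt (γ (r + 1)), ?_, ?_⟩
      · have h2 : g + μ * τ₀ * s / 3 ≤ Real.sqrt (γ (r + 1)) := by
          apply Real.le_sqrt_of_sq_le
          rw [h1]
          nlinarith
        push_cast
        linarith
      · rw [Real.sq_sqrt]
        rw [h1]
        positivity
  intro r
  obtain ⟨g, hg, h⟩ := key r
  have hsr : 0 ≤ s * (μ * τ₀ * r / 3) := by positivity
  have hg0 : 0 < g := by linarith
  have ht := hτg r g hg0 h
  have hσg : σ r = τ₀ * (s * g) := by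
    rw [hσ, ht, h]
    field_simp
  have hle : s * (μ * τ₀ * r / 3) ≤ g := by linarith
  refine ⟨by rw [h]; positivity, ?_, ?_, ?_, ?_, ?_⟩
  · have := pow_le_pow_left₀ hsr hle 2
    rw [h, hss]
    linarith
  · rw [hσg, h, hss, ← mul_pow, Real.sqrt_sq (by positivity)]
  · have := mul_le_mul_of_nonneg_left hle (by positivity : 0 ≤ τ₀ * s)
    rw [hσg, hss]
    linarith
  · rw [hσg, ht, hss]
    field_simp
  · rw [hσg, ht, h]
    field_simp
end

section
/- Let E be a real inner product space and let f₁, …, f_N : E → ℝ be differentiable functions whose gradients ∇f_i are all L-Lipschitz (L > 0). Let λ ∈ ℝ^N satisfy λ_i ≥ 0 for all i and Σ_{i=1}^N λ_i = 1. Let x ∈ E and set c = Σ_{i=1}^N λ_i ∇f_i(x). Let J ≥ 2 be an integer, η > 0, η_g ≥ 1, τ = J·η·η_g, and assume both 4τ²L²/(η_g²·J) ≤ 1/(J−1) and 48·τ·L + 2·(τ·L)² ≤ η_g²/16. For each i define u_{i,0} = x and u_{i,j} = u_{i,j−1} − η·(∇f_i(u_{i,j−1}) − ∇f_i(x) + c)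 for j = 1, …, J. Define d = (1/J)·Σ_{i=1}^N Σ_{j=1}^J λ_i ∇f_i(u_{i,j−1}) and ℰ = (1/J)·Σ_{i=1}^N Σ_{j=1}^J λ_i ‖u_{i,j−1} − x‖². Then 3·L·ℰ ≤ (τ/8)·‖d‖². -/
open scoped RealInnerProductSpace

/-- Drift-control step (the bound T₄ ≤ 0 in Lemma B.1, deterministic gradients):
with weights `λ` in the simplex, control variate `c = Σᵢ λᵢ ∇fᵢ(x)`, effective step size
`τ = J·η·η_g`, and the step-size conditions `4τ²L²/(η_g²J) ≤ 1/(J−1)` and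
`48τL + 2(τL)² ≤ η_g²/16`, the drift `ℰ` of the bias-corrected local iterates and the
aggregated update `d = (1/J) Σᵢ Σ_{j=1}^J λᵢ ∇fᵢ(u_{i,j−1})` satisfy
`3Lℰ ≤ (τ/8)‖d‖²`. -/
theorem drift_control
    {E : Type*} [NormedAddCommGroup E] [InnerProductSpace ℝ E]
    (N : ℕ) (f : Fin N → E → ℝ) (f' : Fin N → E → E) (L : ℝ) (hL : 0 < L)
    (hdiff : ∀ i (y : E),
      HasFDerivAt (f i) (InnerProductSpace.toDualMap ℝ E (f' i y) : E →L[ℝ] ℝ) y)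
    (hLip : ∀ i (x₁ x₂ : E), ‖f' i x₁ - f' i x₂‖ ≤ L * ‖x₁ - x₂‖)
    (lam : Fin N → ℝ) (hlam0 : ∀ i, 0 ≤ lam i) (hlam1 : ∑ i, lam i = 1)
    (x c : E) (hc : c = ∑ i, lam i • f' i x)
    (J : ℕ) (hJ : 2 ≤ J) (η ηg τ : ℝ)
    (hη : 0 < η) (hηg : 1 ≤ ηg) (hτ : τ = J * η * ηg)
    (hstep₁ : 4 * τ ^ 2 * L ^ 2 / (ηg ^ 2 * J) ≤ 1 / ((J : ℝ) - 1))
    (hstep₂ : 48 * τ * L + 2 * (τ * L) ^ 2 ≤ ηg ^ 2 / 16)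
    (u : Fin N → ℕ → E) (hu0 : ∀ i, u i 0 = x)
    (hrec : ∀ i, ∀ j < J, u i (j + 1) = u i j - η • (f' i (u i j) - f' i x + c))
    (d : E) (hd : d = (1 / (J : ℝ)) • ∑ i, ∑ j ∈ Finset.range J, lam i • f' i (u i j))
    (ℰ : ℝ)
    (hE : ℰ = (1 / (J : ℝ)) * ∑ i, ∑ j ∈ Finset.range J, lam i * ‖u i j - x‖ ^ 2) :
    3 * L * ℰ ≤ τ / 8 * ‖d‖ ^ 2 := by
  have hJ0 : (0:ℝ) < J := by
    have : 0 < J := by omega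
    exact_mod_cast this
  have hg0 : 0 < ηg := by linarith
  obtain ⟨a, ha⟩ : ∃ a, a = J * η * L := ⟨_, rfl⟩
  have ha0 : 0 < a := by rw [ha]; positivity
  have hτL : τ * L = a * ηg := by rw [hτ, ha]; ring
  have h1 : 48 * a + 2 * a ^ 2 * ηg ≤ ηg / 16 := by
    have h : ηg * (48 * a + 2 * a ^ 2 * ηg) ≤ ηg * (ηg / 16) := by
      have e : 48 * τ * L + 2 * (τ * L) ^ 2 = ηg * (48 * a + 2 * a ^ 2 * ηg) := by
        rw [mul_assoc, hτL]; ring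
      rw [← e]; linarith
    exact le_of_mul_le_mul_left h hg0
  have h768 : 768 * a ≤ ηg := by
    have : 0 ≤ 2 * a ^ 2 * ηg := by positivity
    linarith
  have ha4 : a ≤ 1 / 4 := by
    have h : ηg * (2 * a ^ 2) ≤ ηg * (1 / 16) := by linarith
    have := le_of_mul_le_mul_left h hg0
    nlinarith
  have hcn := norm_nonneg c
  have hb : ∀ i, ∀ j ≤ J, ‖u i j - x‖ ≤ 2 * j * η * ‖c‖ := by
    intro i j
    induction j with
    | zero => intro _; simp [hu0]
    | succ j ih =>
      intro hj
      have ih := ih (by omega)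
      have hjJ : (j : ℝ) ≤ J := by exact_mod_cast (by omega : j ≤ J)
      have e : u i (j + 1) - x = (u i j - x) - η • ((f' i (u i j) - f' i x) + c) := by
        rw [hrec i j (by omega)]; abel
      have n1 : ‖u i (j + 1) - x‖ ≤ ‖u i j - x‖ + η * (L * ‖u i j - x‖ + ‖c‖) := by
        rw [e]
        refine (norm_sub_le _ _).trans ?_
        rw [norm_smul, Real.norm_of_nonneg hη.le]
        have := (norm_add_le (f' i (u i j) - f' i x) c).trans
          (add_le_add_left (hLip i (u i j) x) _)
        gcongr
      have n2 : η * L * ‖u i j - x‖ ≤ η * ‖c‖ := by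
        calc η * L * ‖u i j - x‖ ≤ η * L * (2 * J * η * ‖c‖) := by
              gcongr
              exact ih.trans (by gcongr)
          _ = (2 * a) * (η * ‖c‖) := by rw [ha]; ring
          _ ≤ 1 * (η * ‖c‖) := by
              gcongr
              linarith
          _ = η * ‖c‖ := one_mul _
      push_cast
      nlinarith
  have hB : ∀ i, ∀ j ∈ Finset.range J, ‖u i j - x‖ ≤ 2 * J * η * ‖c‖ := by
    intro i j hj
    have hj := (Finset.mem_range.1 hj).le
    refine (hb i j hj).trans ?_
    have hjJ : (j : ℝ) ≤ J := by exact_mod_cast hj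
    gcongr
  have havg : ∀ B : ℝ, (1 / (J : ℝ)) * ∑ i, ∑ j ∈ Finset.range J, lam i * B = B := by
    intro B
    simp only [Finset.sum_const, Finset.card_range, nsmul_eq_mul]
    rw [← Finset.mul_sum, ← Finset.sum_mul, hlam1]
    field_simp
  have hEb : ℰ ≤ (2 * J * η * ‖c‖) ^ 2 := by
    rw [hE, ← havg ((2 * J * η * ‖c‖) ^ 2)]
    gcongr with i _ j hj
    · exact hlam0 i
    · exact hB i j hj
  have hdc : d - c = (1 / (J : ℝ)) • ∑ i, ∑ j ∈ Finset.range J,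
      lam i • (f' i (u i j) - f' i x) := by
    have : c = (1 / (J : ℝ)) • ∑ i, ∑ j ∈ Finset.range J, lam i • f' i x := by
      simp only [Finset.sum_const, Finset.card_range]
      rw [← Finset.smul_sum, ← hc, ← Nat.cast_smul_eq_nsmul ℝ, smul_smul,
        one_div_mul_cancel hJ0.ne', one_smul]
    rw [hd]
    nth_rewrite 1 [this]
    simp only [smul_sub, Finset.sum_sub_distrib]
  have hdcn : ‖d - c‖ ≤ 2 * a * ‖c‖ := by
    have e : 2 * a * ‖c‖ = L * (2 * J * η * ‖c‖) := by rw [ha]; ring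
    rw [e, ← havg (L * (2 * J * η * ‖c‖)), hdc, norm_smul,
      Real.norm_of_nonneg (by positivity)]
    gcongr
    refine (norm_sum_le _ _).trans (Finset.sum_le_sum fun i _ => ?_)
    refine (norm_sum_le _ _).trans (Finset.sum_le_sum fun j hj => ?_)
    rw [norm_smul, Real.norm_of_nonneg (hlam0 i)]
    refine mul_le_mul_of_nonneg_left ((hLip i _ _).trans ?_) (hlam0 i)
    exact mul_le_mul_of_nonneg_left (hB i j hj) hL.le
  have hcd : ‖c‖ ≤ 2 * ‖d‖ := by
    have t : ‖c‖ ≤ ‖d‖ + ‖d - c‖ := by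
      have := norm_sub_le d (d - c)
      simpa using this
    nlinarith
  calc 3 * L * ℰ ≤ 3 * L * (2 * J * η * (2 * ‖d‖)) ^ 2 := by
        refine mul_le_mul_of_nonneg_left (hEb.trans ?_) (by positivity)
        gcongr
    _ = (48 * a) * (J * η * ‖d‖ ^ 2) := by rw [ha]; ring
    _ ≤ (ηg / 8) * (J * η * ‖d‖ ^ 2) := by
        gcongr
        linarith
    _ = τ / 8 * ‖d‖ ^ 2 := by rw [hτ]; ring
end
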